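/- Alexandrov–Bakelman–Pucci estimate for lower semicontinuous viscosity supersolutions: Let v be a lower semicontinuous function on the closed ball B̄_{2δ} ⊆ ℝᵐ, bounded below on B_δ, with v ≥ 0 on B_{2δ} \ B_δ, and suppose v is a viscosity supersolution of Δv = f with f continuous. Let Γ_v be the convex envelope Γ_v(z) = sup{ l(z) : l affine, l ≤ v on B_δ, l ≤ 0 on B_{2δ} \ B_δ }. Then sup_{B_δ} max(−inf v, 0) ≤ C·δ·( ∫_{B_δ ∩ {v = Γ_v}} max(f,0)^m dV )^{1/m}, where C depends only on the dimension m. -/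

import Mathlib

open MeasureTheory Metric Set Real Filter Topology

noncomputable section

/-- The convex envelope `Γ_v(z) = sup{ l(z) : l affine, l ≤ v on B_δ, l ≤ 0 on B_{2δ} \ B_δ }`. -/
def convEnv {m : ℕ} (δ : ℝ) (v : EuclideanSpace ℝ (Fin m) → ℝ)
    (z : EuclideanSpace ℝ (Fin m)) : ℝ :=
  sSup {y : ℝ | ∃ l : EuclideanSpace ℝ (Fin m) →ᵃ[ℝ] ℝ,
    (∀ x ∈ ball (0 : EuclideanSpace ℝ (Fin m)) δ, l x ≤ v x) ∧
    (∀ x ∈ ball (0 : EuclideanSpace ℝ (Fin m)) (2 * δ) \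
        ball (0 : EuclideanSpace ℝ (Fin m)) δ, l x ≤ 0) ∧
    y = l z}

/-- The Laplacian of a `C²` function `φ` at `x`, computed in the standard
orthonormal basis of `ℝᵐ`. -/
def lapR {m : ℕ} (φ : EuclideanSpace ℝ (Fin m) → ℝ)
    (x : EuclideanSpace ℝ (Fin m)) : ℝ :=
  ∑ j : Fin m,
    iteratedFDeriv ℝ 2 φ x
      ![EuclideanSpace.single j (1:ℝ), EuclideanSpace.single j (1:ℝ)]

/-- `v` is a (lower semicontinuous) viscosity supersolution of `Δv = f` on the open set `s` :
every `C²` function touching `v` from below at a point of `s` has Laplacian at most `f` there. -/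
def ViscSupersol {m : ℕ} (v f : EuclideanSpace ℝ (Fin m) → ℝ)
    (s : Set (EuclideanSpace ℝ (Fin m))) : Prop :=
  ∀ z₀ ∈ s, ∀ ψ : EuclideanSpace ℝ (Fin m) → ℝ, ∀ ρ > (0:ℝ),
    ball z₀ ρ ⊆ s → ContDiffOn ℝ 2 ψ (ball z₀ ρ) →
    (∀ z ∈ ball z₀ ρ, ψ z ≤ v z) → ψ z₀ = v z₀ → lapR ψ z₀ ≤ f z₀

/-! If `v y < 0` at some `y ∈ B_δ`, every slope `p` with `‖p‖ < -v y / (3 * δ)` is the slope of an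
affine function touching `v` from below at a point of `B_δ`: slide an affine function of slope `p`
upwards until it meets `v`. It is negative on `B_{2δ}`, so the point of contact lies in `{v = Γ_v}`.

On the contact set the map from points to slopes is single-valued, and pointwise Lipschitz at `x`
with every constant above `16 * f⁺ x`. Indeed, suppose that at distance at most `r` from `x₀` the
slope `p + D • e` (`‖e‖ = 1`) occurs, where `p` is the slope at `x₀`. On the part of a ball around
`x₀` between the hyperplanes `⟪e, x - x₀⟫ = ± 2 * r`, compare `v` with the affine function of slope
`p` plus a paraboloid of Laplacian `D / (16 * r)`, bent upwards only in the direction `e`. The two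
subgradient inequalities keep `v` above this function on the boundary, while `v` lies below it at
`x₀`; so the equation gives `D / (16 * r) ≤ f` at a nearby point.

A map with pointwise Lipschitz constant `K` increases volume by at most the density `K ^ m`. Hence
the ball of slopes has volume at most `∫ (16 * f⁺) ^ m` over the contact set. -/

open scoped ENNReal NNReal InnerProductSpace

theorem measure_image_le_lintegral_of_partition {X Y ι : Type*} [MeasurableSpace X]
    [MeasurableSpace Y] [Countable ι] {μ : Measure X} {ν : Measure Y} {g : X → Y} {φ : X → ℝ≥0∞}
    {S : Set X} {Q : ι → Set X} (hQm : ∀ j, MeasurableSet (Q j))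
    (hQd : Pairwise fun i j => Disjoint (Q i) (Q j)) (hQu : ⋃ j, Q j = univ)
    (h : ∀ j, ν (g '' (S ∩ Q j)) ≤ ∫⁻ x in S ∩ Q j, φ x ∂μ) :
    ν (g '' S) ≤ ∫⁻ x in S, φ x ∂μ :=
  calc ν (g '' S) = ν (⋃ j, g '' (S ∩ Q j)) := by
        rw [← image_iUnion, ← inter_iUnion, hQu, inter_univ]
    _ ≤ ∑' j, ν (g '' (S ∩ Q j)) := measure_iUnion_le _
    _ ≤ ∑' j, ∫⁻ x in S ∩ Q j, φ x ∂μ := ENNReal.tsum_le_tsum h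
    _ = ∑' j, ∫⁻ x in Q j, φ x ∂μ.restrict S := by
        simp only [Measure.restrict_restrict (hQm _), inter_comm]
    _ = ∫⁻ x in S, φ x ∂μ := by
        rw [← lintegral_iUnion hQm hQd, hQu, Measure.restrict_univ]

theorem le_lintegral_pow_of_forall_le_lintegral_add_pow {X : Type*} [MeasurableSpace X]
    {μ : Measure X} [IsFiniteMeasure μ] {K : X → ℝ≥0∞} {a : ℝ≥0∞} {d : ℕ} (hK : AEMeasurable K μ)
    (hd : d ≠ 0) (h : ∀ ε : ℝ≥0, 0 < ε → a ≤ ∫⁻ x, (K x + ε) ^ d ∂μ) :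
    a ≤ ∫⁻ x, K x ^ d ∂μ := by
  have hd_pos : (0 : ℝ) < 1 / d := by positivity
  have minkowski (ε : ℝ≥0) (hε : 0 < ε) : a ^ (1 / d : ℝ) ≤
      (∫⁻ x, K x ^ d ∂μ) ^ (1 / d : ℝ) + ε * μ univ ^ (1 / d : ℝ) :=
    calc a ^ (1 / d : ℝ)
        ≤ (∫⁻ x, (K x + ε) ^ d ∂μ) ^ (1 / d : ℝ) := by
          gcongr
          exact h ε hε
      _ ≤ (∫⁻ x, K x ^ d ∂μ) ^ (1 / d : ℝ) + (∫⁻ _, (ε : ℝ≥0∞) ^ d ∂μ) ^ (1 / d : ℝ) := by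
          simpa only [Pi.add_apply, ENNReal.rpow_natCast] using
            ENNReal.lintegral_Lp_add_le (g := fun _ => (ε : ℝ≥0∞)) hK aemeasurable_const
              (Nat.one_le_cast.2 (Nat.one_le_iff_ne_zero.2 hd))
      _ = (∫⁻ x, K x ^ d ∂μ) ^ (1 / d : ℝ) + ε * μ univ ^ (1 / d : ℝ) := by
          rw [lintegral_const, ENNReal.mul_rpow_of_nonneg _ _ hd_pos.le, one_div,
            ENNReal.pow_rpow_inv_natCast hd]
  have error_continuous : Continuous fun ε : ℝ≥0 => (ε : ℝ≥0∞) * μ univ ^ (1 / d : ℝ) :=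
    (ENNReal.continuous_mul_const (by finiteness)).comp ENNReal.continuous_coe
  have bound_tendsto : Tendsto
      (fun ε : ℝ≥0 => (∫⁻ x, K x ^ d ∂μ) ^ (1 / d : ℝ) + ε * μ univ ^ (1 / d : ℝ))
      (𝓝[>] 0) (𝓝 ((∫⁻ x, K x ^ d ∂μ) ^ (1 / d : ℝ))) := by
    simpa only [ENNReal.coe_zero, zero_mul, add_zero] using
      ((error_continuous.tendsto 0).const_add _).mono_left nhdsWithin_le_nhds
  exact (ENNReal.rpow_le_rpow_iff hd_pos).1 <|
    ge_of_tendsto bound_tendsto (eventually_mem_nhdsWithin.mono minkowski)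

section Hausdorff

variable {X Y : Type*} [MetricSpace X] [MeasurableSpace X] [BorelSpace X]
  [MetricSpace Y] [MeasurableSpace Y] [BorelSpace Y] {d : ℕ} {g : X → Y} {S : Set X}

theorem euclideanHausdorffMeasure_image_le_of_lipschitzOnWith {K : ℝ≥0}
    (hg : LipschitzOnWith K g S) :
    μHE[d] (g '' S) ≤ (K : ℝ≥0∞) ^ d * μHE[d] S := by
  have h := hg.hausdorffMeasure_image_le (Nat.cast_nonneg d)
  rw [ENNReal.rpow_natCast] at h
  simp only [Measure.euclideanHausdorffMeasure_def, Measure.smul_apply]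
  rw [ENNReal.smul_def, ENNReal.smul_def, smul_eq_mul, smul_eq_mul, mul_left_comm]
  gcongr

variable [SecondCountableTopology X]

theorem euclideanHausdorffMeasure_image_le_of_dist_lt {K : ℝ≥0} {r : ℝ} (hr : 0 < r)
    (h : ∀ x ∈ S, ∀ y ∈ S, dist y x < r → dist (g y) (g x) ≤ K * dist y x) :
    μHE[d] (g '' S) ≤ (K : ℝ≥0∞) ^ d * μHE[d] S := by
  obtain ⟨Q, hQm, hQb, hQdiam, hQu, hQd⟩ :=
    SeparableSpace.exists_measurable_partition_diam_le X (half_pos hr)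
  rw [← setLIntegral_const]
  refine measure_image_le_lintegral_of_partition hQm hQd hQu fun j => ?_
  rw [setLIntegral_const]
  refine euclideanHausdorffMeasure_image_le_of_lipschitzOnWith <|
    LipschitzOnWith.of_dist_le_mul fun y hy x hx => h x hx.1 y hy.1 ?_
  calc dist y x ≤ r / 2 := (dist_le_diam_of_mem (hQb j) hy.2 hx.2).trans (hQdiam j)
    _ < r := half_lt_self hr

theorem euclideanHausdorffMeasure_image_le_of_eventually_dist_le {K : ℝ≥0}
    (h : ∀ x ∈ S, ∀ᶠ y in 𝓝[S] x, dist (g y) (g x) ≤ K * dist y x) :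
    μHE[d] (g '' S) ≤ (K : ℝ≥0∞) ^ d * μHE[d] S := by
  let T (n : ℕ) : Set X :=
    {x ∈ S | ∀ y ∈ S, dist y x < 1 / ((n : ℝ) + 1) → dist (g y) (g x) ≤ K * dist y x}
  have hTS (n : ℕ) : T n ⊆ S := sep_subset _ _
  have hT_mono : Monotone T := fun i j hij x hx =>
    ⟨hx.1, fun y hy hyx => hx.2 y hy (hyx.trans_le (by gcongr))⟩
  have hT_union : ⋃ n, T n = S := by
    refine (iUnion_subset hTS).antisymm fun x hx => ?_
    obtain ⟨r, hr, hxr⟩ := mem_nhdsWithin_iff.1 (h x hx)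
    obtain ⟨n, hn⟩ := exists_nat_one_div_lt hr
    exact mem_iUnion.2 ⟨n, hx, fun y hy hyx => hxr ⟨hyx.trans hn, hy⟩⟩
  have hT_image (n : ℕ) : μHE[d] (g '' T n) ≤ (K : ℝ≥0∞) ^ d * μHE[d] S :=
    calc μHE[d] (g '' T n)
        ≤ (K : ℝ≥0∞) ^ d * μHE[d] (T n) :=
          euclideanHausdorffMeasure_image_le_of_dist_lt Nat.one_div_pos_of_nat
            fun x hx y hy => hx.2 y hy.1
      _ ≤ (K : ℝ≥0∞) ^ d * μHE[d] S := by gcongr; exact hTS n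
  rw [← hT_union, image_iUnion, Monotone.measure_iUnion fun _ _ hij => image_mono (hT_mono hij),
    hT_union]
  exact iSup_le hT_image

theorem euclideanHausdorffMeasure_image_le_lintegral_add_pow {K : X → ℝ≥0} (hK : Measurable K)
    (h : ∀ x ∈ S, ∀ L > K x, ∀ᶠ y in 𝓝[S] x, dist (g y) (g x) ≤ L * dist y x)
    {ε : ℝ≥0} (hε : 0 < ε) :
    μHE[d] (g '' S) ≤ ∫⁻ x in S, (K x + ε : ℝ≥0∞) ^ d ∂μHE[d] := by
  let level (j : ℕ) : Set X := {x | ⌊K x / ε⌋₊ = j}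
  have h_level (j : ℕ) : MeasurableSet (level j) :=
    Nat.measurable_floor.comp (hK.div_const ε) (measurableSet_singleton j)
  refine measure_image_le_lintegral_of_partition h_level
    (fun i j hij => disjoint_left.2 fun x hi hj => hij (hi.symm.trans hj))
    (iUnion_eq_univ_iff.2 fun x => ⟨_, rfl⟩) fun j => ?_
  have lt_level {x : X} (hx : x ∈ level j) : K x < (j + 1) * ε :=
    (div_lt_iff₀ hε).1 (hx ▸ Nat.lt_floor_add_one (K x / ε))
  have level_le {x : X} (hx : x ∈ level j) : (j + 1) * ε ≤ K x + ε := by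
    have := (le_div_iff₀ hε).1 (hx ▸ Nat.floor_le (zero_le (a := K x / ε)))
    rw [add_mul, one_mul]
    gcongr
  calc μHE[d] (g '' (S ∩ level j))
      ≤ (((j + 1) * ε : ℝ≥0) : ℝ≥0∞) ^ d * μHE[d] (S ∩ level j) :=
        euclideanHausdorffMeasure_image_le_of_eventually_dist_le fun x hx =>
          nhdsWithin_mono x inter_subset_left (h x hx.1 _ (lt_level hx.2))
    _ = ∫⁻ _ in S ∩ level j, (((j + 1) * ε : ℝ≥0) : ℝ≥0∞) ^ d ∂μHE[d] :=
        (setLIntegral_const _ _).symm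
    _ ≤ ∫⁻ x in S ∩ level j, (K x + ε : ℝ≥0∞) ^ d ∂μHE[d] :=
        setLIntegral_mono (by fun_prop) fun x hx => by gcongr; exact_mod_cast level_le hx.2

theorem euclideanHausdorffMeasure_image_le_lintegral_pow {K : X → ℝ≥0} (hK : Measurable K)
    (hS : μHE[d] S ≠ ∞) (hd : d ≠ 0)
    (h : ∀ x ∈ S, ∀ L > K x, ∀ᶠ y in 𝓝[S] x, dist (g y) (g x) ≤ L * dist y x) :
    μHE[d] (g '' S) ≤ ∫⁻ x in S, (K x : ℝ≥0∞) ^ d ∂μHE[d] :=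
  have : IsFiniteMeasure (μHE[d].restrict S) := isFiniteMeasure_restrict.2 hS
  le_lintegral_pow_of_forall_le_lintegral_add_pow hK.coe_nnreal_ennreal.aemeasurable hd
    fun _ => euclideanHausdorffMeasure_image_le_lintegral_add_pow hK h

end Hausdorff

theorem iteratedFDeriv_two_quadratic_apply {E F : Type*} [NormedAddCommGroup E] [NormedSpace ℝ E]
    [NormedAddCommGroup F] [NormedSpace ℝ F] (B : E →L[ℝ] E →L[ℝ] F) (L : E →L[ℝ] F) (c : F)
    (z : E) (u : Fin 2 → E) :
    iteratedFDeriv ℝ 2 (fun x => c + L x + B x x) z u = B (u 0) (u 1) + B (u 1) (u 0) := by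
  have h_fderiv : fderiv ℝ (fun x => c + L x + B x x) = fun x => L + (B + B.flip) x := by
    ext x y
    have h := ((L.hasFDerivAt (x := x)).const_add c).add
      (B.hasFDerivAt_of_bilinear (hasFDerivAt_id x) (hasFDerivAt_id x))
    exact DFunLike.congr_fun h.fderiv y
  rw [iteratedFDeriv_two_apply, h_fderiv, fderiv_const_add, ContinuousLinearMap.fderiv]
  rfl

section Subgradient

variable {E : Type*} [NormedAddCommGroup E] [InnerProductSpace ℝ E] {v : E → ℝ} {s : Set E}

/-- The vector `p` is a subgradient of `v` at `x` relative to `s`: on `s`, the function `v` lies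
above the affine function of slope `p` with value `v x` at `x`. -/
def IsSubgradientOn (v : E → ℝ) (s : Set E) (x p : E) : Prop :=
  ∀ y ∈ s, v x + ⟪p, y - x⟫_ℝ ≤ v y

/-- The image of `A` under the normal map of `v`: all subgradients of `v` relative to `s` at
points of `A`. -/
def normalImage (v : E → ℝ) (s A : Set E) : Set E :=
  {p | ∃ x ∈ A, IsSubgradientOn v s x p}

theorem IsSubgradientOn.mono {t : Set E} {x p : E} (h : IsSubgradientOn v t x p) (hst : s ⊆ t) :
    IsSubgradientOn v s x p :=
  fun y hy => h y (hst hy)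

theorem IsSubgradientOn.add_inner_sub_le {x₀ x₁ p q : E} (hp : IsSubgradientOn v s x₀ p)
    (hq : IsSubgradientOn v s x₁ q) (hx₁ : x₁ ∈ s) {z : E} (hz : z ∈ s) :
    v x₀ + ⟪p, z - x₀⟫_ℝ + ⟪q - p, z - x₁⟫_ℝ ≤ v z :=
  calc v x₀ + ⟪p, z - x₀⟫_ℝ + ⟪q - p, z - x₁⟫_ℝ
      = v x₀ + ⟪p, x₁ - x₀⟫_ℝ + ⟪q, z - x₁⟫_ℝ := by
        simp only [inner_sub_left, inner_sub_right]
        ring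
    _ ≤ v x₁ + ⟪q, z - x₁⟫_ℝ := by gcongr; exact hp x₁ hx₁
    _ ≤ v z := hq z hz

theorem exists_isSubgradientOn (hs : IsCompact s) (hne : s.Nonempty)
    (hv : LowerSemicontinuousOn v s) (p : E) : ∃ x ∈ s, IsSubgradientOn v s x p := by
  have h_inner : Continuous fun x : E => -⟪p, x⟫_ℝ := by fun_prop
  obtain ⟨x, hx, hmin⟩ :=
    (hv.add h_inner.continuousOn.lowerSemicontinuousOn).exists_isMinOn hne hs
  refine ⟨x, hx, fun y hy => ?_⟩
  have := isMinOn_iff.1 hmin y hy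
  rw [inner_sub_right]
  linarith

end Subgradient

section Laplacian

variable {m : ℕ}

theorem lapR_add_const (ψ : EuclideanSpace ℝ (Fin m) → ℝ) (c : ℝ) (z : EuclideanSpace ℝ (Fin m)) :
    lapR (fun x => ψ x + c) z = lapR ψ z := by
  have h_fderiv : fderiv ℝ (fun x => ψ x + c) = fderiv ℝ ψ := funext fun x => fderiv_add_const c
  simp only [lapR, iteratedFDeriv_two_apply, h_fderiv]

theorem lapR_quadratic (e p x₀ z : EuclideanSpace ℝ (Fin m)) (c a b : ℝ) :
    lapR (fun x => c + ⟪p, x - x₀⟫_ℝ + (a * ⟪e, x - x₀⟫_ℝ ^ 2 - b * ‖x - x₀‖ ^ 2)) z =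
      2 * (a * ‖e‖ ^ 2 - b * m) := by
  let B := (a • (innerₗ _ e).smulRight (innerₗ _ e) - b • innerₗ _).toContinuousBilinearMap
  have hB (x y : EuclideanSpace ℝ (Fin m)) :
      B x y = a * (⟪e, x⟫_ℝ * ⟪e, y⟫_ℝ) - b * ⟪x, y⟫_ℝ := by
    simp [B]
  have h_hessian := iteratedFDeriv_two_quadratic_apply B (innerSL ℝ p) c
  simp only [hB, innerSL_apply_apply, real_inner_self_eq_norm_sq, ← sq] at h_hessian
  have h_diag (j : Fin m) : iteratedFDeriv ℝ 2
      (fun x => c + ⟪p, x - x₀⟫_ℝ + (a * ⟪e, x - x₀⟫_ℝ ^ 2 - b * ‖x - x₀‖ ^ 2)) z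
      ![EuclideanSpace.single j 1, EuclideanSpace.single j 1] = 2 * (a * e j ^ 2 - b) := by
    rw [iteratedFDeriv_comp_sub
      (f := fun x => c + ⟪p, x⟫_ℝ + (a * ⟪e, x⟫_ℝ ^ 2 - b * ‖x‖ ^ 2)), h_hessian]
    simp [EuclideanSpace.inner_single_right, ← two_mul, ← sq]
  simp only [lapR, h_diag, ← Finset.mul_sum, Finset.sum_sub_distrib, Finset.sum_const,
    Finset.card_univ, Fintype.card_fin, nsmul_eq_mul, EuclideanSpace.real_norm_sq_eq e,
    mul_comm (m : ℝ)]

end Laplacian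

section Viscosity

variable {m : ℕ} {v f : EuclideanSpace ℝ (Fin m) → ℝ} {s : Set (EuclideanSpace ℝ (Fin m))}

theorem ViscSupersol.mono {t : Set (EuclideanSpace ℝ (Fin m))} (h : ViscSupersol v f t)
    (hst : s ⊆ t) : ViscSupersol v f s :=
  fun z hz ψ ρ hρ hball => h z (hst hz) ψ ρ hρ (hball.trans hst)

theorem ViscSupersol.exists_lapR_le (h : ViscSupersol v f s)
    {K U : Set (EuclideanSpace ℝ (Fin m))} (hK : IsCompact K) (hU : IsOpen U) (hUK : U ⊆ K)
    (hUs : U ⊆ s) (hv : LowerSemicontinuousOn v K) {ψ : EuclideanSpace ℝ (Fin m) → ℝ}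
    (hψ : ContinuousOn ψ K) (hψU : ContDiffOn ℝ 2 ψ U) (h_bdry : ∀ x ∈ K \ U, ψ x ≤ v x)
    {x₀ : EuclideanSpace ℝ (Fin m)} (hx₀ : x₀ ∈ K) (h_lt : v x₀ < ψ x₀) :
    ∃ z ∈ U, lapR ψ z ≤ f z := by
  obtain ⟨z, hzK, hz_min⟩ := (hv.add hψ.neg.lowerSemicontinuousOn).exists_isMinOn ⟨x₀, hx₀⟩ hK
  have hz_le (x) (hx : x ∈ K) : v z - ψ z ≤ v x - ψ x := by
    simpa only [Pi.neg_apply, ← sub_eq_add_neg] using isMinOn_iff.1 hz_min x hx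
  have hzU : z ∈ U := by
    by_contra hzU
    linarith [hz_le x₀ hx₀, h_bdry z ⟨hzK, hzU⟩]
  obtain ⟨ρ, hρ, hρU⟩ := Metric.isOpen_iff.1 hU z hzU
  refine ⟨z, hzU, ?_⟩
  rw [← lapR_add_const ψ (v z - ψ z)]
  exact h z (hUs hzU) _ ρ hρ (hρU.trans hUs) ((hψU.mono hρU).add contDiffOn_const)
    (fun x hx => by linarith [hz_le x (hUK (hρU hx))]) (by ring)

/-- The comparison function for two subgradients `p` and `p + D • e` (with `‖e‖ = 1`), taken at
points within distance `r` of each other and with `κ = D / (16 * r)`: an affine function of slope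
`p` plus a paraboloid that is convex in the direction `e` and slightly concave in the others, so
that its Laplacian is `κ`. -/
def barrier (x₀ p e : EuclideanSpace ℝ (Fin m)) (c κ r : ℝ) (x : EuclideanSpace ℝ (Fin m)) : ℝ :=
  c + ⟪p, x - x₀⟫_ℝ + κ * ((⟪e, x - x₀⟫_ℝ + 2 * r) ^ 2 - ‖x - x₀‖ ^ 2 / (2 * m))

theorem contDiff_barrier {n : WithTop ℕ∞} (x₀ p e : EuclideanSpace ℝ (Fin m)) (c κ r : ℝ) :
    ContDiff ℝ n (barrier x₀ p e c κ r) := by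
  have h_sub : ContDiff ℝ n fun x : EuclideanSpace ℝ (Fin m) => x - x₀ :=
    contDiff_id.sub contDiff_const
  exact (contDiff_const.add (contDiff_const.inner ℝ h_sub)).add <| contDiff_const.mul <|
    (((contDiff_const.inner ℝ h_sub).add contDiff_const).pow 2).sub ((h_sub.norm_sq ℝ).div_const _)

theorem lapR_barrier (hm : m ≠ 0) {e : EuclideanSpace ℝ (Fin m)} (he : ‖e‖ = 1)
    (x₀ p z : EuclideanSpace ℝ (Fin m)) (c κ r : ℝ) : lapR (barrier x₀ p e c κ r) z = κ := by
  have h_expand : barrier x₀ p e c κ r = fun x =>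
      (c + 4 * κ * r ^ 2) + ⟪p + (4 * κ * r) • e, x - x₀⟫_ℝ +
        (κ * ⟪e, x - x₀⟫_ℝ ^ 2 - κ / (2 * m) * ‖x - x₀‖ ^ 2) := by
    ext x
    rw [barrier, inner_add_left, real_inner_smul_left]
    ring
  rw [h_expand, lapR_quadratic, he]
  field_simp
  ring

theorem barrier_le_of_norm_sub_eq (hm : 0 < m) {x₀ p e x : EuclideanSpace ℝ (Fin m)} {c κ r : ℝ}
    (hκ : 0 ≤ κ) (hx : ‖x - x₀‖ = 8 * m * r) (hex : |⟪e, x - x₀⟫_ℝ| ≤ 2 * r) :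
    barrier x₀ p e c κ r x ≤ c + ⟪p, x - x₀⟫_ℝ := by
  have one_le_m : (1 : ℝ) ≤ m := mod_cast hm
  have h_sq : (⟪e, x - x₀⟫_ℝ + 2 * r) ^ 2 ≤ ‖x - x₀‖ ^ 2 / (2 * m) :=
    calc (⟪e, x - x₀⟫_ℝ + 2 * r) ^ 2 ≤ (2 * r + 2 * r) ^ 2 := by
          gcongr
          · linarith [(abs_le.1 hex).1]
          · exact (abs_le.1 hex).2
      _ = 16 * 1 * r ^ 2 := by ring
      _ ≤ 32 * m * r ^ 2 := by gcongr; norm_num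
      _ = ‖x - x₀‖ ^ 2 / (2 * m) := by rw [hx]; field_simp; ring
  rw [barrier]
  linarith [mul_nonpos_of_nonneg_of_nonpos hκ (sub_nonpos.2 h_sq)]

theorem barrier_le_of_inner_le {x₀ p e x : EuclideanSpace ℝ (Fin m)} {c κ r : ℝ} (hκ : 0 ≤ κ) :
    barrier x₀ p e c κ r x ≤ c + ⟪p, x - x₀⟫_ℝ + κ * (⟪e, x - x₀⟫_ℝ + 2 * r) ^ 2 := by
  rw [barrier]
  gcongr
  exact sub_le_self _ (by positivity)

theorem barrier_le_of_isSubgradientOn (hm : 0 < m) {x₀ x₁ p e z : EuclideanSpace ℝ (Fin m)}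
    {D r : ℝ} (hp : IsSubgradientOn v s x₀ p) (hq : IsSubgradientOn v s x₁ (p + D • e))
    (he : ‖e‖ = 1) (hD : 0 ≤ D) (hr : 0 < r) (hx₁ : x₁ ∈ s) (hx₁r : ‖x₁ - x₀‖ ≤ r) (hz : z ∈ s)
    (hez : |⟪e, z - x₀⟫_ℝ| ≤ 2 * r)
    (h_bdry : ‖z - x₀‖ = 8 * m * r ∨ |⟪e, z - x₀⟫_ℝ| = 2 * r) :
    barrier x₀ p e (v x₀) (D / (16 * r)) r z ≤ v z := by
  have hκ : 0 ≤ D / (16 * r) := by positivity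
  rcases h_bdry with hz_norm | hz_inner
  · exact (barrier_le_of_norm_sub_eq hm hκ hz_norm hez).trans (hp z hz)
  refine (barrier_le_of_inner_le hκ).trans ?_
  rcases (abs_eq (by positivity)).1 hz_inner with h_right | h_left
  · have h_gap : D * r ≤ ⟪p + D • e - p, z - x₁⟫_ℝ :=
      calc D * r = D * (2 * r - 1 * r) := by ring
        _ ≤ D * (⟪e, z - x₀⟫_ℝ - ⟪e, x₁ - x₀⟫_ℝ) := by
          gcongr
          · exact h_right.ge
          · exact (real_inner_le_norm _ _).trans (by gcongr; exact he.le)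
        _ = ⟪p + D • e - p, z - x₁⟫_ℝ := by
          rw [add_sub_cancel_left, real_inner_smul_left, ← inner_sub_right,
            sub_sub_sub_cancel_right]
    calc v x₀ + ⟪p, z - x₀⟫_ℝ + D / (16 * r) * (⟪e, z - x₀⟫_ℝ + 2 * r) ^ 2
        = v x₀ + ⟪p, z - x₀⟫_ℝ + D * r := by rw [h_right]; field_simp; ring
      _ ≤ v x₀ + ⟪p, z - x₀⟫_ℝ + ⟪p + D • e - p, z - x₁⟫_ℝ := by gcongr
      _ ≤ v z := hp.add_inner_sub_le hq hx₁ hz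
  · rw [h_left]
    simpa only [neg_add_cancel, zero_pow two_ne_zero, mul_zero, add_zero] using hp z hz

theorem ViscSupersol.le_of_isSubgradientOn_add_smul (h : ViscSupersol v f s) (hm : 0 < m)
    (hv : LowerSemicontinuousOn v s) {x₀ x₁ p e : EuclideanSpace ℝ (Fin m)} {D r B : ℝ}
    (hp : IsSubgradientOn v s x₀ p) (hq : IsSubgradientOn v s x₁ (p + D • e)) (he : ‖e‖ = 1)
    (hD : 0 < D) (hr : 0 < r) (hx₁ : ‖x₁ - x₀‖ ≤ r) (hs : closedBall x₀ (8 * m * r) ⊆ s)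
    (hf : ∀ z ∈ closedBall x₀ (8 * m * r), f z ≤ B) : D ≤ 16 * B * r := by
  have one_le_m : (1 : ℝ) ≤ m := mod_cast hm
  have h_inner : Continuous fun x => |⟪e, x - x₀⟫_ℝ| := by fun_prop
  let K := closedBall x₀ (8 * m * r) ∩ {x | |⟪e, x - x₀⟫_ℝ| ≤ 2 * r}
  let U := ball x₀ (8 * m * r) ∩ {x | |⟪e, x - x₀⟫_ℝ| < 2 * r}
  have hK : IsCompact K :=
    (isCompact_closedBall x₀ _).inter_right (isClosed_le h_inner continuous_const)
  have hU : IsOpen U := isOpen_ball.inter (isOpen_lt h_inner continuous_const)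
  have hUK : U ⊆ K :=
    inter_subset_inter ball_subset_closedBall (Set.ofPred_subset_ofPred.2 fun _ => le_of_lt)
  have hKs : K ⊆ s := inter_subset_left.trans hs
  have hx₁s : x₁ ∈ s := hs <| mem_closedBall_iff_norm.2 <| hx₁.trans <| by nlinarith
  have hx₀K : x₀ ∈ K := ⟨mem_closedBall_self (by positivity), by simp [hr.le]⟩
  have h_bdry : ∀ x ∈ K \ U, barrier x₀ p e (v x₀) (D / (16 * r)) r x ≤ v x := by
    rintro x ⟨hxK, hxU⟩
    refine barrier_le_of_isSubgradientOn hm hp hq he hD.le hr hx₁s hx₁ (hKs hxK) hxK.2 ?_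
    by_contra! h_ne
    exact hxU ⟨mem_ball_iff_norm.2 ((mem_closedBall_iff_norm.1 hxK.1).lt_of_ne h_ne.1),
      lt_of_le_of_ne hxK.2 h_ne.2⟩
  have h_center : v x₀ < barrier x₀ p e (v x₀) (D / (16 * r)) r x₀ := by
    simp only [barrier, sub_self, inner_zero_right, norm_zero, zero_pow two_ne_zero, zero_div,
      add_zero, zero_add, sub_zero, lt_add_iff_pos_right]
    positivity
  have hψ := contDiff_barrier (n := 2) x₀ p e (v x₀) (D / (16 * r)) r
  obtain ⟨z, hzU, hz⟩ := h.exists_lapR_le hK hU hUK (hUK.trans hKs) (hv.mono hKs)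
    hψ.continuous.continuousOn hψ.contDiffOn h_bdry hx₀K h_center
  rw [lapR_barrier hm.ne' he] at hz
  calc D = D / (16 * r) * (16 * r) := by field_simp
    _ ≤ B * (16 * r) := by gcongr; exact hz.trans (hf z (hUK hzU).1)
    _ = 16 * B * r := by ring

theorem ViscSupersol.norm_sub_le_of_isSubgradientOn (h : ViscSupersol v f s) (hm : 0 < m)
    (hv : LowerSemicontinuousOn v s) {x₀ x₁ p q : EuclideanSpace ℝ (Fin m)} {r B : ℝ}
    (hp : IsSubgradientOn v s x₀ p) (hq : IsSubgradientOn v s x₁ q) (hr : 0 < r) (hB : 0 ≤ B)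
    (hx₁ : ‖x₁ - x₀‖ ≤ r) (hs : closedBall x₀ (8 * m * r) ⊆ s)
    (hf : ∀ z ∈ closedBall x₀ (8 * m * r), f z ≤ B) : ‖q - p‖ ≤ 16 * B * r := by
  rcases eq_or_ne (q - p) 0 with hqp | hqp
  · rw [hqp, norm_zero]
    positivity
  have hq : IsSubgradientOn v s x₁ (p + ‖q - p‖ • ‖q - p‖⁻¹ • (q - p)) := by
    rwa [smul_inv_smul₀ (norm_ne_zero_iff.2 hqp), add_sub_cancel]
  exact h.le_of_isSubgradientOn_add_smul hm hv hp hq (norm_smul_inv_norm (𝕜 := ℝ) hqp)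
    (norm_pos_iff.2 hqp) hr hx₁ hs hf

theorem ViscSupersol.eventually_norm_sub_le (h : ViscSupersol v f s) (hm : 0 < m) (hs : IsOpen s)
    (hv : LowerSemicontinuousOn v s) (hf : UpperSemicontinuousOn f s)
    {x₀ p : EuclideanSpace ℝ (Fin m)} (hx₀ : x₀ ∈ s) (hp : IsSubgradientOn v s x₀ p) {L : ℝ}
    (hL : 0 ≤ L) (hfL : 16 * f x₀ < L) :
    ∀ᶠ x in 𝓝 x₀, ∀ q, IsSubgradientOn v s x q → ‖q - p‖ ≤ L * ‖x - x₀‖ := by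
  have hf_near : ∀ᶠ z in 𝓝 x₀, z ∈ s ∧ f z < L / 16 := by
    refine Filter.Eventually.and (hs.mem_nhds hx₀) ?_
    rw [← hs.nhdsWithin_eq hx₀]
    exact hf x₀ hx₀ _ (by linarith)
  obtain ⟨ρ, hρ, hρ_sub⟩ := Metric.eventually_nhds_iff_ball.1 hf_near
  filter_upwards [ball_mem_nhds x₀ (show 0 < ρ / (8 * m) by positivity)] with x hx q hq
  rw [mem_ball_iff_norm] at hx
  have h_tendsto : Tendsto (fun r => L * r) (𝓝[>] ‖x - x₀‖) (𝓝 (L * ‖x - x₀‖)) :=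
    (tendsto_id.const_mul L).mono_left nhdsWithin_le_nhds
  refine ge_of_tendsto h_tendsto ?_
  filter_upwards [Ioo_mem_nhdsGT hx] with r ⟨hxr, hrρ⟩
  have h_ball : closedBall x₀ (8 * m * r) ⊆ ball x₀ ρ :=
    closedBall_subset_ball <| by rwa [mul_comm, ← lt_div_iff₀ (by positivity)]
  calc ‖q - p‖ ≤ 16 * (L / 16) * r :=
        h.norm_sub_le_of_isSubgradientOn hm hv hp hq ((norm_nonneg _).trans_lt hxr) (by positivity)
          hxr.le (fun z hz => (hρ_sub z (h_ball hz)).1) fun z hz => (hρ_sub z (h_ball hz)).2.le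
    _ = L * r := by ring

theorem ViscSupersol.isSubgradientOn_unique (h : ViscSupersol v f s) (hm : 0 < m) (hs : IsOpen s)
    (hv : LowerSemicontinuousOn v s) (hf : UpperSemicontinuousOn f s)
    {x p q : EuclideanSpace ℝ (Fin m)} (hx : x ∈ s) (hp : IsSubgradientOn v s x p)
    (hq : IsSubgradientOn v s x q) : q = p := by
  have h_near := h.eventually_norm_sub_le hm hs hv hf hx hp (L := |16 * f x| + 1) (by positivity)
    ((le_abs_self _).trans_lt (lt_add_one _))
  simpa [sub_eq_zero] using h_near.self_of_nhds q hq

end Viscosity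

section Semicontinuous

variable {X : Type*} [TopologicalSpace X] [MeasurableSpace X] [OpensMeasurableSpace X]
  {f : X → ℝ} {s : Set X}

theorem measurable_indicator_of_upperSemicontinuousOn (hs : MeasurableSet s)
    (hf : UpperSemicontinuousOn f s) : Measurable (s.indicator f) := by
  refine measurable_of_restrict_of_restrict_compl hs ?_ ?_
  · convert (upperSemicontinuousOn_iff_restrict.2 hf).measurable using 1
    exact funext fun x => indicator_of_mem x.2 f
  · convert measurable_const (a := (0 : ℝ)) using 1
    exact funext fun x => indicator_of_notMem x.2 f

theorem integrableOn_max_zero_pow_of_upperSemicontinuousOn [T2Space X] {μ : Measure X}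
    [IsFiniteMeasureOnCompacts μ] (hs : IsCompact s) (hf : UpperSemicontinuousOn f s) (d : ℕ) :
    IntegrableOn (fun x => max (f x) 0 ^ d) s μ := by
  obtain ⟨M, hM⟩ := hf.bddAbove_of_isCompact hs
  have hf_meas : AEMeasurable f (μ.restrict s) := (aemeasurable_indicator_iff hs.measurableSet).1
    (measurable_indicator_of_upperSemicontinuousOn hs.measurableSet hf).aemeasurable
  refine ⟨((hf_meas.max aemeasurable_const).pow_const d).aestronglyMeasurable,
    .restrict_of_bounded (C := max M 0 ^ d) hs.measure_lt_top ?_⟩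
  filter_upwards [ae_restrict_mem hs.measurableSet] with x hx
  rw [Real.norm_of_nonneg (by positivity)]
  gcongr
  exact hM (mem_image_of_mem f hx)

end Semicontinuous

theorem lintegral_ofReal_mul_pow {X : Type*} [MeasurableSpace X] {μ : Measure X} {f : X → ℝ}
    {c : ℝ} (hc : 0 ≤ c) {d : ℕ} (hf : Integrable (fun x => max (f x) 0 ^ d) μ) :
    ∫⁻ x, ENNReal.ofReal (c * f x) ^ d ∂μ =
      ENNReal.ofReal (c ^ d * ∫ x, max (f x) 0 ^ d ∂μ) := by
  rw [← integral_const_mul, ofReal_integral_eq_lintegral_ofReal (hf.const_mul _)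
    (Eventually.of_forall fun x => by positivity)]
  refine lintegral_congr fun x => ?_
  have h_posPart : ENNReal.ofReal (c * f x) = ENNReal.ofReal (c * max (f x) 0) := by
    rw [mul_max_of_nonneg _ _ hc, mul_zero, ENNReal.ofReal_max, ENNReal.ofReal_zero, max_zero]
  rw [h_posPart, ← ENNReal.ofReal_pow (by positivity), mul_pow]

theorem ViscSupersol.volume_normalImage_le {m : ℕ} {v f : EuclideanSpace ℝ (Fin m) → ℝ}
    {s A : Set (EuclideanSpace ℝ (Fin m))} (h : ViscSupersol v f s) (hm : 0 < m) (hs : IsOpen s)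
    (hv : LowerSemicontinuousOn v s) (hf : UpperSemicontinuousOn f s) (hAs : A ⊆ s)
    (hA : volume A ≠ ∞) :
    volume (normalImage v s A) ≤ ∫⁻ x in A, ENNReal.ofReal (16 * f x) ^ m := by
  let T := {x ∈ A | ∃ p, IsSubgradientOn v s x p}
  have hTA : T ⊆ A := sep_subset _ _
  choose! g hg using fun x (hx : x ∈ T) => hx.2
  have h_image : normalImage v s A ⊆ g '' T := fun p ⟨x, hx, hp⟩ =>
    ⟨x, ⟨hx, p, hp⟩, h.isSubgradientOn_unique hm hs hv hf (hAs hx) hp (hg x ⟨hx, p, hp⟩)⟩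
  let K (x : EuclideanSpace ℝ (Fin m)) : ℝ≥0 := (16 * s.indicator f x).toNNReal
  have hK : Measurable K :=
    ((measurable_indicator_of_upperSemicontinuousOn hs.measurableSet hf).const_mul 16).real_toNNReal
  have hK_le (x) : (K x : ℝ≥0∞) ≤ ENNReal.ofReal (16 * f x) := by
    by_cases hx : x ∈ s <;> simp [K, hx, ENNReal.ofReal]
  have hg_lip : ∀ x ∈ T, ∀ L > K x, ∀ᶠ y in 𝓝[T] x, dist (g y) (g x) ≤ L * dist y x := by
    intro x hx L hL
    have hxs : x ∈ s := hAs (hTA hx)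
    have hfL : 16 * f x < L := by
      rw [← indicator_of_mem hxs f]
      exact (Real.le_coe_toNNReal _).trans_lt hL
    filter_upwards [mem_nhdsWithin_of_mem_nhds <| h.eventually_norm_sub_le hm hs hv hf hxs
      (hg x hx) L.coe_nonneg hfL, self_mem_nhdsWithin] with y hy hyT
    simpa only [dist_eq_norm] using hy (g y) (hg y hyT)
  calc volume (normalImage v s A) ≤ volume (g '' T) := measure_mono h_image
    _ ≤ ∫⁻ x in T, (K x : ℝ≥0∞) ^ m := by
      simpa only [EuclideanSpace.euclideanHausdorffMeasure_eq_volume] using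
        euclideanHausdorffMeasure_image_le_lintegral_pow hK
          (by simpa only [EuclideanSpace.euclideanHausdorffMeasure_eq_volume] using
            measure_ne_top_of_subset hTA hA) hm.ne' hg_lip
    _ ≤ ∫⁻ x in A, ENNReal.ofReal (16 * f x) ^ m :=
      lintegral_mono' (Measure.restrict_mono hTA le_rfl) fun x => by gcongr; exact hK_le x

section Contact

variable {m : ℕ} {v f : EuclideanSpace ℝ (Fin m) → ℝ} {δ : ℝ} {x p : EuclideanSpace ℝ (Fin m)}

theorem eq_convEnv_of_isSubgradientOn (hx : x ∈ ball 0 δ) (hp : IsSubgradientOn v (ball 0 δ) x p)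
    (h_neg : ∀ y ∈ ball 0 (2 * δ) \ ball 0 δ, v x + ⟪p, y - x⟫_ℝ ≤ 0) : v x = convEnv δ v x := by
  let l : EuclideanSpace ℝ (Fin m) →ᵃ[ℝ] ℝ :=
    (innerₗ _ p).toAffineMap + AffineMap.const ℝ _ (v x - ⟪p, x⟫_ℝ)
  have hl (y) : l y = v x + ⟪p, y - x⟫_ℝ := by
    simp only [l, AffineMap.coe_add, LinearMap.coe_toAffineMap, AffineMap.coe_const, Pi.add_apply,
      innerₗ_apply_apply, Function.const_apply, inner_sub_right]
    ring
  rw [eq_comm, convEnv]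
  refine IsGreatest.csSup_eq ⟨⟨l, fun y hy => ?_, fun y hy => ?_, ?_⟩, ?_⟩
  · exact (hl y).trans_le (hp y hy)
  · exact (hl y).trans_le (h_neg y hy)
  · rw [hl, sub_self, inner_zero_right, add_zero]
  · rintro _ ⟨l', hl', -, rfl⟩
    exact hl' x hx

theorem ball_subset_normalImage (hv : LowerSemicontinuousOn v (closedBall 0 δ))
    (hv_sphere : ∀ z ∈ sphere 0 δ, 0 ≤ v z) {y₀ : EuclideanSpace ℝ (Fin m)} (hy₀ : y₀ ∈ ball 0 δ) :
    ball 0 (-v y₀ / (3 * δ)) ⊆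
      normalImage v (ball 0 δ) (ball 0 δ ∩ {z | v z = convEnv δ v z}) := by
  intro p hp
  have hδ : 0 < δ := pos_of_mem_ball hy₀
  obtain ⟨x, hx, hp_sub⟩ := exists_isSubgradientOn (isCompact_closedBall 0 δ)
    ⟨y₀, ball_subset_closedBall hy₀⟩ hv p
  have h_neg : ∀ y ∈ ball (0 : EuclideanSpace ℝ (Fin m)) (2 * δ), v x + ⟪p, y - x⟫_ℝ < 0 := by
    intro y hy
    rw [mem_ball_zero_iff] at hp hy hy₀
    calc v x + ⟪p, y - x⟫_ℝ = v x + ⟪p, y₀ - x⟫_ℝ + ⟪p, y - y₀⟫_ℝ := by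
          rw [add_assoc, ← inner_add_right, add_comm (y₀ - x), sub_add_sub_cancel]
      _ ≤ v y₀ + ‖p‖ * ‖y - y₀‖ := by
          gcongr
          · exact hp_sub y₀ (ball_subset_closedBall (mem_ball_zero_iff.2 hy₀))
          · exact real_inner_le_norm _ _
      _ ≤ v y₀ + ‖p‖ * (2 * δ + δ) := by
          gcongr
          exact (norm_sub_le _ _).trans (by gcongr)
      _ < 0 := by
          rw [lt_div_iff₀ (by positivity)] at hp
          linarith
  have hx_ball : x ∈ ball 0 δ := by
    rw [← closedBall_sdiff_sphere]
    refine ⟨hx, fun hx_sphere => (hv_sphere x hx_sphere).not_gt ?_⟩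
    simpa using h_neg x (closedBall_subset_ball (by linarith) hx)
  have hp_ball := hp_sub.mono ball_subset_closedBall
  exact ⟨x, ⟨hx_ball, eq_convEnv_of_isSubgradientOn hx_ball hp_ball fun y hy => (h_neg y hy.1).le⟩,
    hp_ball⟩

end Contact

theorem le_mul_rpow_of_pow_mul_le {a b ω J : ℝ} {n : ℕ} (hn : n ≠ 0) (hb : 0 ≤ b) (hω : 0 < ω)
    (hJ : 0 ≤ J) (h : a ^ n * ω ≤ b ^ n * J) :
    a ≤ b * ω⁻¹ ^ (1 / n : ℝ) * J ^ (1 / n : ℝ) := by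
  refine le_of_pow_le_pow_left₀ hn (by positivity) ?_
  rw [mul_pow, mul_pow, one_div, Real.rpow_inv_natCast_pow hJ hn,
    Real.rpow_inv_natCast_pow (by positivity) hn, mul_right_comm, ← div_eq_mul_inv, le_div_iff₀ hω]
  exact h

theorem ViscSupersol.pow_mul_volume_le {m : ℕ} {v f : EuclideanSpace ℝ (Fin m) → ℝ} {δ : ℝ}
    (h : ViscSupersol v f (ball 0 δ)) (hm : 0 < m)
    (hv : LowerSemicontinuousOn v (closedBall 0 δ)) (hv_sphere : ∀ z ∈ sphere 0 δ, 0 ≤ v z)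
    (hf : UpperSemicontinuousOn f (closedBall 0 δ)) {y : EuclideanSpace ℝ (Fin m)}
    (hy : y ∈ ball 0 δ) (hvy : v y < 0) :
    (-v y / (3 * δ)) ^ m * volume.real (ball (0 : EuclideanSpace ℝ (Fin m)) 1) ≤
      16 ^ m * ∫ z in ball 0 δ ∩ {z | v z = convEnv δ v z}, max (f z) 0 ^ m := by
  have hR : 0 < -v y / (3 * δ) := div_pos (neg_pos.2 hvy) (by linarith [pos_of_mem_ball hy])
  have h_int : IntegrableOn (fun z => max (f z) 0 ^ m) (ball 0 δ ∩ {z | v z = convEnv δ v z}) :=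
    (integrableOn_max_zero_pow_of_upperSemicontinuousOn (isCompact_closedBall 0 δ) hf m).mono_set
      (inter_subset_left.trans ball_subset_closedBall)
  have h_volume : volume (ball (0 : EuclideanSpace ℝ (Fin m)) (-v y / (3 * δ))) ≤
      ENNReal.ofReal (16 ^ m *
        ∫ z in ball 0 δ ∩ {z | v z = convEnv δ v z}, max (f z) 0 ^ m) :=
    calc _ ≤ volume (normalImage v (ball 0 δ) (ball 0 δ ∩ {z | v z = convEnv δ v z})) :=
          measure_mono (ball_subset_normalImage hv hv_sphere hy)
      _ ≤ ∫⁻ z in ball 0 δ ∩ {z | v z = convEnv δ v z}, ENNReal.ofReal (16 * f z) ^ m :=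
          h.volume_normalImage_le hm isOpen_ball (hv.mono ball_subset_closedBall)
            (hf.mono ball_subset_closedBall) inter_subset_left
            (measure_ne_top_of_subset inter_subset_left measure_ball_lt_top.ne)
      _ = _ := lintegral_ofReal_mul_pow (by norm_num) h_int
  have h_real := ENNReal.toReal_mono ENNReal.ofReal_ne_top h_volume
  rwa [Measure.addHaar_ball_of_pos _ _ hR, finrank_euclideanSpace_fin, ENNReal.toReal_mul,
    ENNReal.toReal_ofReal (by positivity), ENNReal.toReal_ofReal (by positivity),
    ← measureReal_def] at h_real

theorem abp_estimate_general (m : ℕ) (hm : 0 < m) :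
    ∃ C > (0 : ℝ), ∀ δ > (0 : ℝ), ∀ v f : EuclideanSpace ℝ (Fin m) → ℝ,
      LowerSemicontinuousOn v (closedBall 0 δ) →
      (∀ z ∈ sphere (0 : EuclideanSpace ℝ (Fin m)) δ, 0 ≤ v z) →
      UpperSemicontinuousOn f (closedBall 0 δ) →
      ViscSupersol v f (ball 0 δ) →
      max (-sInf (v '' ball 0 δ)) 0 ≤
        C * δ * (∫ z in ball 0 δ ∩ {z | v z = convEnv δ v z}, max (f z) 0 ^ m) ^ (1 / m : ℝ) := by
  have hω : 0 < volume.real (ball (0 : EuclideanSpace ℝ (Fin m)) 1) :=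
    ENNReal.toReal_pos (measure_ball_pos volume 0 one_pos).ne' measure_ball_lt_top.ne
  refine ⟨48 * (volume.real (ball (0 : EuclideanSpace ℝ (Fin m)) 1))⁻¹ ^ (1 / m : ℝ),
    by positivity, fun δ hδ v f hv hv_sphere hf h => max_le ?_ (by positivity)⟩
  rw [neg_le]
  refine le_csInf ((nonempty_ball.2 hδ).image v) (forall_mem_image.2 fun y hy => ?_)
  rw [neg_le]
  rcases lt_or_ge (v y) 0 with hvy | hvy
  · have h_root := le_mul_rpow_of_pow_mul_le hm.ne' (by norm_num) hω (by positivity)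
      (h.pow_mul_volume_le hm hv hv_sphere hf hy hvy)
    rw [div_le_iff₀ (by positivity)] at h_root
    linarith
  · exact (neg_nonpos.2 hvy).trans (by positivity)

/-- **Alexandrov–Bakelman–Pucci estimate** for lower semicontinuous viscosity
supersolutions: `sup_{B_δ} max(−inf v, 0) ≤ C δ (∫_{B_δ ∩ {v = Γ_v}} max(f,0)^m dV)^{1/m}`,
with a constant `C` depending only on the dimension `m`. -/
theorem abp_estimate (m : ℕ) (hm : 0 < m) :
    ∃ C > (0:ℝ), ∀ δ > (0:ℝ), ∀ v f : EuclideanSpace ℝ (Fin m) → ℝ,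
      LowerSemicontinuousOn v (closedBall (0 : EuclideanSpace ℝ (Fin m)) (2 * δ)) →
      BddBelow (v '' ball (0 : EuclideanSpace ℝ (Fin m)) δ) →
      (∀ z ∈ ball (0 : EuclideanSpace ℝ (Fin m)) (2 * δ) \
          ball (0 : EuclideanSpace ℝ (Fin m)) δ, 0 ≤ v z) →
      ContinuousOn f (ball (0 : EuclideanSpace ℝ (Fin m)) (2 * δ)) →
      ViscSupersol v f (ball (0 : EuclideanSpace ℝ (Fin m)) (2 * δ)) →
      max (-sInf (v '' ball (0 : EuclideanSpace ℝ (Fin m)) δ)) 0 ≤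
        C * δ * (∫ z in ball (0 : EuclideanSpace ℝ (Fin m)) δ ∩
            {z | v z = convEnv δ v z}, max (f z) 0 ^ m) ^ ((1:ℝ) / m) := by
  obtain ⟨C, hC, h_est⟩ := abp_estimate_general m hm
  refine ⟨C, hC, fun δ hδ v f hv _ hv_nonneg hf h => ?_⟩
  have hδ2 : δ < 2 * δ := by linarith
  have h_sphere : sphere (0 : EuclideanSpace ℝ (Fin m)) δ ⊆ ball 0 (2 * δ) \ ball 0 δ :=
    fun z hz => ⟨sphere_subset_ball hδ2 hz, sphere_disjoint_ball.notMem_of_mem_left hz⟩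
  exact h_est δ hδ v f (hv.mono (closedBall_subset_closedBall hδ2.le))
    (fun z hz => hv_nonneg z (h_sphere hz))
    (hf.mono (closedBall_subset_ball hδ2)).upperSemicontinuousOn (h.mono (ball_subset_ball hδ2.le))
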